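/- arXiv:2102.08720 — 3 statements merged into one kernel-verified Lean document; each statement's English description precedes it below -/
import Mathlib

section
/- Let R be a commutative ring, M a module over R, and p a natural number. Let η₁,…,η_p : M →ₗ[R] R be linear functionals, B₁,…,B_p : M →ₗ[R] M be endomorphisms, and v₁,…,v_p ∈ M. Then ∑_{σ ∈ Sym(p)} det( (η_i (B_{σ(j)} v_j))_{i,j} ) = ∑_{σ ∈ Sym(p)} det( (η_i (B_{σ(i)} v_j))_{i,j} ), where the determinants are of the p×p matrices indexed by i,j ∈ {1,…,p}. -/
/-- The alternating operator identity: for linear functionals `η i`, endomorphisms `B i`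
and vectors `v i`, summing over all permutations the determinant of the matrix
`(η i (B (σ j) (v j)))` equals the sum over all permutations of the determinant of
`(η i (B (σ i) (v j)))`. -/
theorem alternating_operator_identity
    (R : Type*) [CommRing R] (M : Type*) [AddCommGroup M] [Module R M]
    (p : ℕ) (η : Fin p → (M →ₗ[R] R)) (B : Fin p → (M →ₗ[R] M)) (v : Fin p → M) :
    ∑ σ : Equiv.Perm (Fin p),
        Matrix.det (Matrix.of fun i j => η i (B (σ j) (v j)))
      = ∑ σ : Equiv.Perm (Fin p),
        Matrix.det (Matrix.of fun i j => η i (B (σ i) (v j))) := by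
  simp only [Matrix.det_apply, Matrix.of_apply]
  rw [Finset.sum_comm]
  conv_rhs => rw [Finset.sum_comm]
  refine Finset.sum_congr rfl fun τ _ => ?_
  exact (Equiv.sum_comp (Equiv.mulRight τ) (fun σ : Equiv.Perm (Fin p) =>
    Equiv.Perm.sign τ • ∏ j, η (τ j) (B (σ j) (v j)))).symm
end

section
/- Let E be a real normed vector space with dim E ≥ 2, let U ⊆ E be an open connected set, let P : E → E be twice continuously differentiable on U, and let f : E → ℝ be a function such that for every x ∈ U the Fréchet derivative of P at x equals f(x) • id_E. Then there exist a constant c ∈ ℝ and a vector b ∈ E such that f(x) = c and P(x) = c • x + b for every x ∈ U. -/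
/-- A position vector field in flat space of dimension at least 2 is affine:
if `P` is `C²` on an open connected set `U` with `DP(x) = f(x) • id` on `U`,
then `f` is a constant `c` on `U` and `P x = c • x + b` there. -/
theorem position_vector_field_flat
    (E : Type*) [NormedAddCommGroup E] [NormedSpace ℝ E]
    (hdim : 2 ≤ Module.rank ℝ E)
    (U : Set E) (hU : IsOpen U) (hUconn : IsConnected U)
    (P : E → E) (hP : ContDiffOn ℝ 2 P U)
    (f : E → ℝ)
    (hf : ∀ x ∈ U, fderiv ℝ P x = f x • ContinuousLinearMap.id ℝ E) :
    ∃ (c : ℝ) (b : E), ∀ x ∈ U, f x = c ∧ P x = c • x + b := by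
  have h1 : 1 < Module.rank ℝ E := lt_of_lt_of_le (by norm_num) hdim
  haveI : Nontrivial E := rank_pos_iff_nontrivial.1 (lt_trans zero_lt_one h1)
  obtain ⟨e, he⟩ := exists_ne (0 : E)
  obtain ⟨g, hg⟩ := SeparatingDual.exists_eq_one (R := ℝ) he
  have hPat : ∀ x ∈ U, ContDiffAt ℝ 2 P x := fun x hx => hP.contDiffAt (hU.mem_nhds hx)
  have hPd : ∀ x ∈ U, DifferentiableAt ℝ (fderiv ℝ P) x := fun x hx =>
    ((hPat x hx).fderiv_right (m := 1) (by norm_num)).differentiableAt (by norm_num)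
  have hfd : ∀ x ∈ U, DifferentiableAt ℝ f x := by
    intro x hx
    have h2 : DifferentiableAt ℝ (fun y => g (fderiv ℝ P y e)) x :=
      g.differentiableAt.comp x ((hPd x hx).clm_apply (differentiableAt_const e))
    refine h2.congr_of_eventuallyEq ?_
    filter_upwards [hU.mem_nhds hx] with y hy
    simp [hf y hy, hg]
  have hf0 : ∀ x ∈ U, fderiv ℝ f x = 0 := by
    intro x hx
    have hsnd : fderiv ℝ (fderiv ℝ P) x
        = (fderiv ℝ f x).smulRight (ContinuousLinearMap.id ℝ E) := by
      have h3 : fderiv ℝ P =ᶠ[nhds x] fun y => f y • ContinuousLinearMap.id ℝ E := by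
        filter_upwards [hU.mem_nhds hx] with y hy using hf y hy
      rw [h3.fderiv_eq]
      exact ((hfd x hx).hasFDerivAt.smul_const _).fderiv
    have hsymm := (hPat x hx).isSymmSndFDerivAt (by simp)
    ext v
    by_cases hv : v = 0
    · simp [hv]
    obtain ⟨w, hw⟩ := exists_linearIndependent_pair_of_one_lt_rank h1 hv
    have h4 := hsymm v w
    rw [hsnd] at h4
    simp only [ContinuousLinearMap.smulRight_apply, ContinuousLinearMap.smul_apply,
      ContinuousLinearMap.id_apply] at h4
    have h5 := LinearIndependent.pair_iff.1 hw (-(fderiv ℝ f x w)) (fderiv ℝ f x v)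
      (by rw [h4]; simp)
    simpa using h5.2
  obtain ⟨c, hc⟩ := hU.exists_is_const_of_fderiv_eq_zero hUconn.isPreconnected
    (fun x hx => (hfd x hx).differentiableWithinAt) (fun x hx => hf0 x hx)
  have hPdiff : ∀ x ∈ U, DifferentiableAt ℝ P x := fun x hx =>
    (hPat x hx).differentiableAt (by norm_num)
  obtain ⟨b, hb⟩ := hU.exists_is_const_of_fderiv_eq_zero (𝕜 := ℝ)
    (f := fun x => P x - c • x) hUconn.isPreconnected
    (fun x hx => ((hPdiff x hx).sub (differentiableAt_id.const_smul c)).differentiableWithinAt)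
    (fun x hx => by
      have h6 := ((hPdiff x hx).hasFDerivAt.sub ((hasFDerivAt_id (𝕜 := ℝ) x).const_smul c)).fderiv
      rw [hf x hx, hc x hx, sub_self] at h6
      exact h6)
  refine ⟨c, b, fun x hx => ⟨hc x hx, ?_⟩⟩
  rw [← hb x hx]
  simp
end

section
/- Let n ≥ 2, let (N, μ) be a measure space with finite measure, let f, φ : N → ℝ be integrable functions, let a : N → (Fin n → ℝ) be a family of functions, and let H₁, H₂ ∈ ℝ be constants such that for every x ∈ N: ∑_i a_i(x) = n·H₁ and ∑_{i<j} a_i(x)·a_j(x) = (n(n−1)/2)·H₂. Assume the integral identities ∫_N (f − φ·H₁) dμ = 0 and ∫_N (f·H₁ − φ·H₂) dμ = 0 hold. If ∫_N f dμ ≠ 0, then H₁ ≠ 0, H₂ ≠ 0, ∫_N φ dμ ≠ 0, H₂ = H₁², and for every x ∈ N and all indices i, j one has a_i(x) = a_j(x) = H₁. -/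
open MeasureTheory

theorem sq_sum_eq_aux (n : ℕ) (b : Fin n → ℝ) :
    (∑ i, b i) ^ 2 = ∑ i, b i ^ 2 + 2 * ∑ i, ∑ j ∈ Finset.Ioi i, b i * b j := by
  have h := Finset.sum_sum_Ioi_add_eq_sum_sum_off_diag (fun i j => b i * b j)
  have h1 : ∑ i, ∑ j ∈ Finset.Ioi i, (b j * b i + b i * b j)
      = 2 * ∑ i, ∑ j ∈ Finset.Ioi i, b i * b j := by
    simp only [Finset.mul_sum]
    refine Finset.sum_congr rfl fun i _ => Finset.sum_congr rfl fun j _ => by ring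
  rw [← h1, h, ← Finset.sum_add_distrib, sq, Finset.sum_mul_sum, Finset.sum_comm]
  refine Finset.sum_congr rfl fun i _ => ?_
  rw [Fintype.sum_eq_add_sum_compl i, sq]

/-- Case (ii) of the final theorem: with constant `H₁, H₂` and the first two
Hsiung–Minkowski identities, if `∫ f ≠ 0`, then `H₁ ≠ 0`, `H₂ ≠ 0`, `∫ φ ≠ 0`,
`H₂ = H₁²`, and the hypersurface is totally umbilic: all principal curvature
functions equal `H₁`. -/
theorem umbilic_of_integral_f_ne_zero
    (n : ℕ) (hn : 2 ≤ n)
    (N : Type*) [MeasurableSpace N] (μ : Measure N) [IsFiniteMeasure μ]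
    (f φ : N → ℝ) (hf : Integrable f μ) (hφ : Integrable φ μ)
    (a : N → Fin n → ℝ) (H₁ H₂ : ℝ)
    (ha1 : ∀ x, ∑ i, a x i = n * H₁)
    (ha2 : ∀ x, ∑ i, ∑ j ∈ Finset.Ioi i, a x i * a x j = ((n : ℝ) * ((n : ℝ) - 1) / 2) * H₂)
    (hHM1 : ∫ x, (f x - φ x * H₁) ∂μ = 0)
    (hHM2 : ∫ x, (f x * H₁ - φ x * H₂) ∂μ = 0)
    (hfint : ∫ x, f x ∂μ ≠ 0) :
    H₁ ≠ 0 ∧ H₂ ≠ 0 ∧ (∫ x, φ x ∂μ) ≠ 0 ∧ H₂ = H₁ ^ 2 ∧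
      ∀ x, ∀ i j, a x i = H₁ ∧ a x j = H₁ := by
  rw [integral_sub hf (hφ.mul_const _), integral_mul_const] at hHM1
  rw [integral_sub (hf.mul_const _) (hφ.mul_const _), integral_mul_const,
    integral_mul_const] at hHM2
  set F := ∫ x, f x ∂μ
  set P := ∫ x, φ x ∂μ
  have hF : F = P * H₁ := by linarith
  have hP : P ≠ 0 := by
    intro h
    exact hfint (by rw [hF, h, zero_mul])
  have hH : H₁ ≠ 0 := by
    intro h
    exact hfint (by rw [hF, h, mul_zero])
  have hH2 : H₂ = H₁ ^ 2 := by
    apply mul_left_cancel₀ hP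
    rw [hF] at hHM2
    linarith
  have key : ∀ x i, a x i = H₁ := by
    intro x i
    have h := sq_sum_eq_aux n (a x)
    rw [ha1, ha2, hH2] at h
    have hz : ∑ i, (a x i - H₁) ^ 2 = 0 := by
      have e : ∑ i, (a x i - H₁) ^ 2
          = ∑ i, a x i ^ 2 - 2 * H₁ * ∑ i, a x i + n * H₁ ^ 2 := by
        rw [Finset.mul_sum, ← Finset.sum_sub_distrib]
        have : (n : ℝ) * H₁ ^ 2 = ∑ _i : Fin n, H₁ ^ 2 := by simp
        rw [this, ← Finset.sum_add_distrib]
        exact Finset.sum_congr rfl fun i _ => by ring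
      rw [e, ha1]
      linarith
    have := (Finset.sum_eq_zero_iff_of_nonneg (fun i _ => sq_nonneg (a x i - H₁))).1 hz i
      (Finset.mem_univ i)
    exact sub_eq_zero.1 (pow_eq_zero_iff two_ne_zero |>.1 this)
  refine ⟨hH, ?_, hP, hH2, fun x i j => ⟨key x i, key x j⟩⟩
  rw [hH2]
  exact pow_ne_zero 2 hH
end
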